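/- Let 0 < ε < 1. For every bound M there exists an odd integer Δ > M of the form Δ = q³(q^{d−2} − 1)/(q − 1), where q is an odd prime power and d ≥ 3/ε is an odd integer, together with a finite simple graph Γ which is arc-transitive, regular of degree Δ, has diameter at most 2, and whose number of vertices exceeds Δ^{2−ε} + 2Δ^{1−ε/3} + Δ^{1−2ε/3} + 3 (real powers). -/

import Mathlib

open Real

/-- A graph is arc-transitive if its automorphism group acts transitively on the set of
arcs (ordered pairs of adjacent vertices). -/
def SimpleGraph.IsArcTransitive {V : Type*} (G : SimpleGraph V) : Prop :=
  ∀ u v x y : V, G.Adj u v → G.Adj x y → ∃ φ : G ≃g G, φ u = x ∧ φ v = y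

/-!
Take the flags of a point on a line in the projective space of dimension `d - 1` over a field with
`q` elements, two flags being adjacent when their lines meet in a single point that is neither of
the two base points. An arc is then the same as an ordered triple of non-collinear points (the two
base points and the meeting point), and the linear group permutes such triples transitively. A
neighbour of a flag is determined by one of the `q` other points of its line and by one of the
`q² (q ^ (d - 2) - 1) / (q - 1)` points off that line. A common neighbour of two flags is found by
taking a second point on each line and a new base point on the line joining them.

Writing `Δ` for the degree, `q ^ d ≤ Δ ≤ 2 q ^ d` while there are more than `q ^ (2 d - 3)` flags.
As soon as `d ε ≥ 4` we have `Δ ^ ε ≥ q ^ 4`, so `Δ ^ (2 - ε)` is at most `4 q ^ (2 d - 4)`, which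
is smaller by a factor of order `q`.
-/

open Module
open scoped LinearAlgebra.Projectivization Pointwise

section ProjectivePoints

variable {K V : Type*} [DivisionRing K] [AddCommGroup V] [Module K V]

theorem exists_point_le_not_le_not_le {L S T : Submodule K V} (hS : ¬ L ≤ S) (hT : ¬ L ≤ T) :
    ∃ x : ℙ K V, x.submodule ≤ L ∧ ¬ x.submodule ≤ S ∧ ¬ x.submodule ≤ T := by
  have hST : ¬ (L : Set V) ⊆ S ∪ T := by
    rw [AddSubgroupClass.subset_union]
    exact not_or.2 ⟨hS, hT⟩
  obtain ⟨v, hvL, hvST⟩ := Set.not_subset.1 hST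
  obtain ⟨hvS, hvT⟩ := not_or.1 hvST
  have hv : v ≠ 0 := fun h => hvS (h ▸ S.zero_mem)
  refine ⟨.mk K v hv, ?_⟩
  simpa only [Projectivization.submodule_mk, Submodule.span_singleton_le_iff_mem] using
    ⟨hvL, hvS, hvT⟩

theorem not_top_le_of_finrank_lt {L : Submodule K V} (h : finrank K L < finrank K V) :
    ¬ ⊤ ≤ L :=
  fun htop => h.ne (by rw [top_le_iff.1 htop, finrank_top])

theorem submodule_le_submodule_iff {x y : ℙ K V} : x.submodule ≤ y.submodule ↔ x = y := by
  refine ⟨fun h => Projectivization.submodule_injective ?_, fun h => h ▸ le_rfl⟩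
  exact Submodule.eq_of_le_of_finrank_eq h (by simp only [Projectivization.finrank_submodule])

theorem submodule_inf_eq_bot {x : ℙ K V} {L : Submodule K V} (h : ¬ x.submodule ≤ L) :
    x.submodule ⊓ L = ⊥ :=
  ((Submodule.isAtom_iff_finrank_eq_one.2 x.finrank_submodule).not_le_iff_disjoint.1 h).eq_bot

theorem finrank_submodule_sup_submodule {x y : ℙ K V} (h : x ≠ y) :
    finrank K ↥(x.submodule ⊔ y.submodule) = 2 := by
  have hinf := submodule_inf_eq_bot (submodule_le_submodule_iff.not.2 h)
  have hsum := Submodule.finrank_sup_add_finrank_inf_eq x.submodule y.submodule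
  rwa [hinf, finrank_bot, x.finrank_submodule, y.finrank_submodule, add_zero] at hsum

theorem submodule_sup_submodule_eq {x y : ℙ K V} {L : Submodule K V} (h : x ≠ y)
    (hx : x.submodule ≤ L) (hy : y.submodule ≤ L) (hL : finrank K L = 2) :
    x.submodule ⊔ y.submodule = L := by
  have : Module.Finite K L := Module.finite_of_finrank_eq_succ hL
  exact Submodule.eq_of_le_of_finrank_eq (sup_le hx hy)
    ((finrank_submodule_sup_submodule h).trans hL.symm)

theorem inf_submodule_sup_submodule {x y : ℙ K V} {L : Submodule K V}
    (hx : x.submodule ≤ L) (hy : ¬ y.submodule ≤ L) :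
    L ⊓ (y.submodule ⊔ x.submodule) = x.submodule := by
  rw [inf_comm, sup_comm, sup_inf_assoc_of_le _ hx, submodule_inf_eq_bot hy, sup_bot_eq]

theorem independent_triple_of_not_le {x y z : ℙ K V} (hyz : y ≠ z)
    (hx : ¬ x.submodule ≤ y.submodule ⊔ z.submodule) :
    Projectivization.Independent ![x, y, z] := by
  rw [Projectivization.independent_iff]
  have hcomp : Projectivization.rep ∘ ![x, y, z] = Fin.cons x.rep ![y.rep, z.rep] := by
    ext i
    fin_cases i <;> rfl
  rw [hcomp, linearIndependent_finCons]
  refine ⟨Projectivization.linearIndependent_pair_iff_ne.2 hyz, fun h => hx ?_⟩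
  rw [Matrix.range_cons_cons_empty, Submodule.span_insert] at h
  simpa only [Projectivization.submodule_eq, Submodule.span_singleton_le_iff_mem] using h

theorem exists_linearEquiv_smul_eq {ι : Type*} [Finite ι] {f f' : ι → ℙ K V}
    (hf : Projectivization.Independent f) (hf' : Projectivization.Independent f') :
    ∃ g : V ≃ₗ[K] V, ∀ i, g • f i = f' i := by
  rw [Projectivization.independent_iff] at hf hf'
  have : FiniteDimensional K (Submodule.span K (Set.range (Projectivization.rep ∘ f))) :=
    FiniteDimensional.span_of_finite K (Set.finite_range _)
  obtain ⟨g, hg⟩ := Submodule.exists_linearEquiv_restrict_eq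
    (hf.linearCombinationEquiv.symm ≪≫ₗ hf'.linearCombinationEquiv)
  have hrep (i : ι) : g (f i).rep = (f' i).rep := by
    simpa using (hg (hf.linearCombinationEquiv (Finsupp.single i 1))).symm
  refine ⟨g, fun i => ?_⟩
  rw [← (f i).mk_rep, Projectivization.smul_mk, ← (f' i).mk_rep, Projectivization.mk_eq_mk_iff']
  exact ⟨1, by rw [one_smul, LinearEquiv.smul_def, hrep]⟩

theorem submodule_smul {G : Type*} [Group G] [DistribMulAction G V] [SMulCommClass G K V]
    (g : G) (x : ℙ K V) : (g • x).submodule = g • x.submodule := by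
  induction x with
  | h v hv => simp [Submodule.pointwise_smul_def, Submodule.map_span]

theorem ncard_points_le (L : Submodule K V) :
    {x : ℙ K V | x.submodule ≤ L}.ncard = Nat.card (ℙ K L) := by
  have hrange : {x : ℙ K V | x.submodule ≤ L} =
      Set.range (Projectivization.map L.subtype L.subtype_injective) := by
    ext x
    induction x with
    | h v hv =>
      rw [Set.mem_ofPred_eq, Projectivization.submodule_mk, Submodule.span_singleton_le_iff_mem]
      constructor
      · exact fun hvL => ⟨.mk K ⟨v, hvL⟩ (by simpa using hv), rfl⟩
      · rintro ⟨y, hy⟩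
        induction y with
        | h w hw =>
          obtain ⟨a, rfl⟩ := (Projectivization.mk_eq_mk_iff' K _ _ _ _).1 hy.symm
          exact L.smul_mem a w.2
  rw [hrange, ← Set.image_univ, Set.ncard_image_of_injective _ (Projectivization.map_injective _ _),
    Set.ncard_univ]

end ProjectivePoints

/-- A point-line flag of the projective space `ℙ K V`; a line of `ℙ K V` is encoded as a
two-dimensional subspace of `V`. -/
@[ext]
structure PointLineFlag (K V : Type*) [DivisionRing K] [AddCommGroup V] [Module K V] where
  /-- The point of the flag. -/
  point : ℙ K V
  /-- The line of the flag. -/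
  line : Submodule K V
  finrank_line : finrank K line = 2
  point_le_line : point.submodule ≤ line

namespace PointLineFlag

variable {K V : Type*} [DivisionRing K] [AddCommGroup V] [Module K V]

/-- The flag formed by a point `x` and the line joining `x` to a second point `y`. -/
def join (x y : ℙ K V) (h : x ≠ y) : PointLineFlag K V where
  point := x
  line := x.submodule ⊔ y.submodule
  finrank_line := finrank_submodule_sup_submodule h
  point_le_line := le_sup_left

/-- The points of the line of a flag other than the point of the flag. -/
def otherPoints (F : PointLineFlag K V) : Set (ℙ K V) :=
  {x | F.point ≠ x ∧ x.submodule ≤ F.line}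

theorem join_point_eq {F : PointLineFlag K V} {x : ℙ K V} (hx : x ∈ F.otherPoints) :
    join F.point x hx.1 = F :=
  PointLineFlag.ext rfl (submodule_sup_submodule_eq hx.1 F.point_le_line hx.2 F.finrank_line)

theorem not_line_le_submodule (F : PointLineFlag K V) (x : ℙ K V) :
    ¬ F.line ≤ x.submodule := by
  intro h
  have := Submodule.finrank_mono h
  rw [F.finrank_line, x.finrank_submodule] at this
  omega

theorem not_line_le_line {F G : PointLineFlag K V} (h : F.line ≠ G.line) :
    ¬ F.line ≤ G.line := by
  have : Module.Finite K G.line := Module.finite_of_finrank_eq_succ G.finrank_line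
  exact fun hle => h <|
    Submodule.eq_of_le_of_finrank_eq hle (F.finrank_line.trans G.finrank_line.symm)

theorem exists_mem_otherPoints_not_le {F : PointLineFlag K V} {S : Submodule K V}
    (h : ¬ F.line ≤ S) : ∃ x ∈ F.otherPoints, ¬ x.submodule ≤ S := by
  obtain ⟨x, hx, hFx, hxS⟩ :=
    exists_point_le_not_le_not_le (F.not_line_le_submodule F.point) h
  exact ⟨x, ⟨fun e => hFx (e ▸ le_rfl), hx⟩, hxS⟩

/-- Any group acting `K`-linearly on `V` acts on the flags of `ℙ K V`. -/
instance {G : Type*} [Group G] [DistribMulAction G V] [SMulCommClass G K V] :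
    MulAction G (PointLineFlag K V) where
  smul g F :=
    { point := g • F.point
      line := g • F.line
      finrank_line := by
        rw [← F.finrank_line]
        exact LinearEquiv.finrank_map_eq (DistribMulAction.toLinearEquiv K V g) F.line
      point_le_line := by
        rw [submodule_smul]
        exact Submodule.map_mono F.point_le_line }
  one_smul F := PointLineFlag.ext (one_smul G F.point) (one_smul G F.line)
  mul_smul g h F := PointLineFlag.ext (mul_smul g h F.point) (mul_smul g h F.line)

/-- The flag graph of `ℙ K V`: two flags are adjacent when their lines meet in a single point,
different from the points of both flags. -/
def flagGraph (K V : Type*) [DivisionRing K] [AddCommGroup V] [Module K V] :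
    SimpleGraph (PointLineFlag K V) where
  Adj F G := ∃ x : ℙ K V, F.point ≠ x ∧ G.point ≠ x ∧ F.line ⊓ G.line = x.submodule
  symm := ⟨fun F G ⟨x, hF, hG, hx⟩ => ⟨x, hG, hF, inf_comm F.line G.line ▸ hx⟩⟩
  loopless := ⟨fun F ⟨x, _, _, hx⟩ => F.not_line_le_submodule x (by rw [← hx, inf_idem])⟩

theorem ne_of_mem_otherPoints {F : PointLineFlag K V} {x y : ℙ K V} (hx : x ∈ F.otherPoints)
    (hy : ¬ y.submodule ≤ F.line) : y ≠ x :=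
  fun e => hy (e ▸ hx.2)

theorem adj_join {F : PointLineFlag K V} {x y : ℙ K V} (hx : x ∈ F.otherPoints)
    (hy : ¬ y.submodule ≤ F.line) :
    (flagGraph K V).Adj F (join y x (ne_of_mem_otherPoints hx hy)) :=
  ⟨x, hx.1, ne_of_mem_otherPoints hx hy, inf_submodule_sup_submodule hx.2 hy⟩

theorem exists_join_eq_of_adj {F G : PointLineFlag K V} (h : (flagGraph K V).Adj F G) :
    ∃ (x : ℙ K V) (y : ℙ K V) (hx : x ∈ F.otherPoints) (hy : ¬ y.submodule ≤ F.line),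
      join y x (ne_of_mem_otherPoints hx hy) = G := by
  obtain ⟨x, hFx, hGx, hmeet⟩ := h
  have hxF : x.submodule ≤ F.line := hmeet ▸ inf_le_left
  have hxG : x.submodule ≤ G.line := hmeet ▸ inf_le_right
  have hG : ¬ G.point.submodule ≤ F.line := fun hle =>
    hGx (submodule_le_submodule_iff.1 (hmeet ▸ le_inf hle G.point_le_line))
  exact ⟨x, G.point, ⟨hFx, hxF⟩, hG, join_point_eq ⟨hGx, hxG⟩⟩

theorem exists_independent_of_adj {F G : PointLineFlag K V} (h : (flagGraph K V).Adj F G) :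
    ∃ (x y z : ℙ K V) (hyx : y ≠ x) (hzx : z ≠ x),
      Projectivization.Independent ![z, y, x] ∧ join y x hyx = F ∧ join z x hzx = G := by
  obtain ⟨x, z, hx, hz, hG⟩ := exists_join_eq_of_adj h
  have hF := join_point_eq hx
  refine ⟨x, F.point, z, hx.1, ne_of_mem_otherPoints hx hz,
    independent_triple_of_not_le hx.1 ?_, hF, hG⟩
  rwa [← hF] at hz

section Action

variable {H : Type*} [Group H] [DistribMulAction H V] [SMulCommClass H K V]

theorem smul_join (g : H) {x y : ℙ K V} (h : x ≠ y) :
    g • join x y h = join (g • x) (g • y) ((MulAction.injective g).ne h) := by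
  refine PointLineFlag.ext rfl ?_
  change g • (x.submodule ⊔ y.submodule) = (g • x).submodule ⊔ (g • y).submodule
  rw [Submodule.smul_sup', submodule_smul, submodule_smul]

theorem adj_smul (g : H) {F G : PointLineFlag K V} (h : (flagGraph K V).Adj F G) :
    (flagGraph K V).Adj (g • F) (g • G) := by
  obtain ⟨x, hF, hG, hx⟩ := h
  refine ⟨g • x, (MulAction.injective g).ne hF, (MulAction.injective g).ne hG, ?_⟩
  rw [submodule_smul, ← hx]
  exact (Submodule.map_inf _ (MulAction.injective g)).symm

/-- The automorphism of the flag graph induced by an element of a group acting linearly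
on `V`. -/
def smulIso (g : H) : flagGraph K V ≃g flagGraph K V where
  toEquiv := MulAction.toPerm g
  map_rel_iff' {F G} :=
    ⟨fun h => by simpa only [MulAction.toPerm_apply, inv_smul_smul] using adj_smul g⁻¹ h,
      adj_smul g⟩

end Action

theorem flagGraph_isArcTransitive : (flagGraph K V).IsArcTransitive := by
  intro F G F' G' hFG hFG'
  obtain ⟨x, y, z, hyx, hzx, hind, rfl, rfl⟩ := exists_independent_of_adj hFG
  obtain ⟨x', y', z', hyx', hzx', hind', rfl, rfl⟩ := exists_independent_of_adj hFG'
  obtain ⟨g, hg⟩ := exists_linearEquiv_smul_eq hind hind'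
  have hz : g • z = z' := hg 0
  have hy : g • y = y' := hg 1
  have hx : g • x = x' := hg 2
  subst hx hy hz
  exact ⟨smulIso g, smul_join g hyx, smul_join g hzx⟩

theorem exists_adj_adj_of_line_eq (hV : 2 < finrank K V) {F G : PointLineFlag K V}
    (h : F.line = G.line) :
    ∃ W, (flagGraph K V).Adj F W ∧ (flagGraph K V).Adj W G := by
  have htop : ¬ ⊤ ≤ F.line := not_top_le_of_finrank_lt (F.finrank_line ▸ hV)
  obtain ⟨x, hxF, hGx⟩ := exists_mem_otherPoints_not_le (F.not_line_le_submodule G.point)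
  obtain ⟨y, -, hyF, -⟩ := exists_point_le_not_le_not_le htop htop
  have hxG : x ∈ G.otherPoints := ⟨fun e => hGx (e ▸ le_rfl), h ▸ hxF.2⟩
  exact ⟨join y x (ne_of_mem_otherPoints hxF hyF), adj_join hxF hyF,
    (adj_join hxG (h ▸ hyF)).symm⟩

theorem exists_adj_adj_of_line_ne {F G : PointLineFlag K V} (h : F.line ≠ G.line) :
    ∃ W, (flagGraph K V).Adj F W ∧ (flagGraph K V).Adj W G := by
  obtain ⟨x, hxF, hxG⟩ := exists_mem_otherPoints_not_le (not_line_le_line h)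
  obtain ⟨x', hxG', hxF'⟩ := exists_mem_otherPoints_not_le (not_line_le_line h.symm)
  obtain ⟨y, hy, hyF, hyG⟩ : ∃ y : ℙ K V, y.submodule ≤ x.submodule ⊔ x'.submodule ∧
      ¬ y.submodule ≤ F.line ∧ ¬ y.submodule ≤ G.line :=
    exists_point_le_not_le_not_le (fun hle => hxF' (le_sup_right.trans hle))
      (fun hle => hxG (le_sup_left.trans hle))
  have hyx := ne_of_mem_otherPoints hxF hyF
  have hyx' := ne_of_mem_otherPoints hxG' hyG
  have hline := finrank_submodule_sup_submodule (ne_of_mem_otherPoints hxG' hxG)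
  have hjoin : join y x hyx = join y x' hyx' := PointLineFlag.ext rfl <|
    (submodule_sup_submodule_eq hyx hy le_sup_left hline).trans
      (submodule_sup_submodule_eq hyx' hy le_sup_right hline).symm
  exact ⟨join y x hyx, adj_join hxF hyF, hjoin ▸ (adj_join hxG' hyG).symm⟩

theorem exists_adj_adj (hV : 2 < finrank K V) (F G : PointLineFlag K V) :
    ∃ W, (flagGraph K V).Adj F W ∧ (flagGraph K V).Adj W G :=
  (eq_or_ne F.line G.line).elim (exists_adj_adj_of_line_eq hV) exists_adj_adj_of_line_ne

theorem nonempty_of_one_lt_finrank (hV : 1 < finrank K V) : Nonempty (PointLineFlag K V) := by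
  have hbot : ¬ (⊤ : Submodule K V) ≤ ⊥ :=
    not_top_le_of_finrank_lt (by rw [finrank_bot]; omega)
  obtain ⟨x, -, -, -⟩ := exists_point_le_not_le_not_le hbot hbot
  have hx : ¬ ⊤ ≤ x.submodule := not_top_le_of_finrank_lt (x.finrank_submodule ▸ hV)
  obtain ⟨y, -, hy, -⟩ := exists_point_le_not_le_not_le hx hx
  exact ⟨join y x fun e => hy (e ▸ le_rfl)⟩

theorem flagGraph_connected (hV : 2 < finrank K V) : (flagGraph K V).Connected := by
  have := nonempty_of_one_lt_finrank (one_lt_two.trans hV)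
  refine ⟨fun F G => ?_⟩
  obtain ⟨W, hFW, hWG⟩ := exists_adj_adj hV F G
  exact hFW.reachable.trans hWG.reachable

theorem flagGraph_dist_le_two (hV : 2 < finrank K V) (F G : PointLineFlag K V) :
    (flagGraph K V).dist F G ≤ 2 := by
  obtain ⟨W, hFW, hWG⟩ := exists_adj_adj hV F G
  exact SimpleGraph.dist_le (.cons hFW hWG.toWalk)

instance [Finite V] : Finite (PointLineFlag K V) :=
  .of_injective (fun F => (F.point, F.line)) fun _ _ h =>
    PointLineFlag.ext (Prod.ext_iff.1 h).1 (Prod.ext_iff.1 h).2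

theorem ncard_otherPoints [Finite K] (F : PointLineFlag K V) :
    F.otherPoints.ncard = Nat.card K := by
  have hdiff : F.otherPoints = {x : ℙ K V | x.submodule ≤ F.line} \ {F.point} := by
    ext x
    exact and_comm.trans (and_congr_right' ne_comm)
  rw [hdiff, Set.ncard_sdiff_singleton_of_mem F.point_le_line, ncard_points_le,
    Projectivization.card_of_finrank_two K _ F.finrank_line, Nat.add_sub_cancel]

theorem ncard_neighborSet (F : PointLineFlag K V) :
    ((flagGraph K V).neighborSet F).ncard =
      F.otherPoints.ncard * {x : ℙ K V | ¬ x.submodule ≤ F.line}.ncard := by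
  rw [← Set.ncard_prod]
  refine (Set.ncard_congr
    (fun p hp => join p.2 p.1 (ne_of_mem_otherPoints hp.1 hp.2)) ?_ ?_ ?_).symm
  · exact fun p hp => adj_join hp.1 hp.2
  · rintro ⟨x, y⟩ ⟨x', y'⟩ hp hp' h
    obtain rfl : y = y' := congrArg point h
    have hline : y.submodule ⊔ x.submodule = y.submodule ⊔ x'.submodule := congrArg line h
    have hx : x.submodule = x'.submodule := by
      rw [← inf_submodule_sup_submodule hp.1.2 hp.2, hline,
        inf_submodule_sup_submodule hp'.1.2 hp'.2]
    rw [Projectivization.submodule_injective hx]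
  · intro G hG
    obtain ⟨x, y, hx, hy, rfl⟩ := exists_join_eq_of_adj hG
    exact ⟨(x, y), ⟨hx, hy⟩, rfl⟩

theorem ncard_neighborSet_of_finrank [Finite K] {n : ℕ} (hV : finrank K V = n + 2)
    (F : PointLineFlag K V) :
    ((flagGraph K V).neighborSet F).ncard =
      Nat.card K ^ 3 * ∑ i ∈ Finset.range n, Nat.card K ^ i := by
  have : Module.Finite K V := Module.finite_of_finrank_eq_succ hV
  have : Finite V := Module.finite_of_finite K
  have hoff : {x : ℙ K V | ¬ x.submodule ≤ F.line}.ncard =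
      Nat.card K ^ 2 * ∑ i ∈ Finset.range n, Nat.card K ^ i := by
    rw [← Set.compl_ofPred, Set.ncard_compl, ncard_points_le,
      Projectivization.card_of_finrank_two K _ F.finrank_line,
      Projectivization.card_of_finrank K V hV, geom_sum_succ, geom_sum_succ]
    refine Nat.sub_eq_of_eq_add ?_
    ring
  rw [ncard_neighborSet, ncard_otherPoints, hoff]
  ring

/-- A flag together with a further point of its line amounts to an ordered pair of distinct
points. -/
def sigmaOtherPointsEquiv :
    (Σ F : PointLineFlag K V, F.otherPoints) ≃ Σ x : ℙ K V, {y // x ≠ y} where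
  toFun s := ⟨s.1.point, s.2, s.2.2.1⟩
  invFun s := ⟨join s.1 s.2 s.2.2, s.2, s.2.2, le_sup_right⟩
  left_inv s := Sigma.subtype_ext (join_point_eq s.2.2) rfl
  right_inv _ := rfl

theorem card_mul_card [Finite K] [Finite V] :
    Nat.card (PointLineFlag K V) * Nat.card K =
      Nat.card (ℙ K V) * (Nat.card (ℙ K V) - 1) := by
  have := Fintype.ofFinite (PointLineFlag K V)
  have := Fintype.ofFinite (ℙ K V)
  have hcompl (x : ℙ K V) : Nat.card {y // x ≠ y} = Nat.card (ℙ K V) - 1 := by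
    rw [← Set.ncard_singleton x, ← Set.ncard_compl, ← Nat.card_coe_set_eq]
    exact Nat.card_congr (Equiv.subtypeEquivRight fun _ => ne_comm)
  have := Nat.card_congr (sigmaOtherPointsEquiv (K := K) (V := V))
  simpa only [Nat.card_sigma, Nat.card_coe_set_eq, ncard_otherPoints, hcompl, Finset.sum_const,
    Finset.card_univ, Nat.card_eq_fintype_card, smul_eq_mul] using this

theorem card_of_finrank [Finite K] {n : ℕ} (hV : finrank K V = n + 1) :
    Nat.card (PointLineFlag K V) =
      (∑ i ∈ Finset.range (n + 1), Nat.card K ^ i) * ∑ i ∈ Finset.range n, Nat.card K ^ i := by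
  have : Module.Finite K V := Module.finite_of_finrank_eq_succ hV
  have : Finite V := Module.finite_of_finite K
  refine Nat.eq_of_mul_eq_mul_right (Nat.card_pos (α := K)) ?_
  rw [card_mul_card, Projectivization.card_of_finrank K V hV, geom_sum_succ, Nat.add_sub_cancel]
  ring

end PointLineFlag

theorem pow_le_geom_sum (q n : ℕ) : q ^ n ≤ ∑ i ∈ Finset.range (n + 1), q ^ i :=
  Finset.single_le_sum (f := (q ^ ·)) (fun _ _ => Nat.zero_le _) (Finset.self_mem_range_succ n)

theorem geom_sum_le_two_mul_pow {q : ℕ} (hq : 2 ≤ q) (n : ℕ) :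
    ∑ i ∈ Finset.range (n + 1), q ^ i ≤ 2 * q ^ n := by
  have := Nat.geomSum_lt hq (s := Finset.range n) fun _ => Finset.mem_range.1
  rw [Finset.sum_range_succ]
  omega

theorem pow_mul_geom_sum_eq_div {q : ℕ} (hq : 2 ≤ q) (m n : ℕ) :
    q ^ m * ∑ i ∈ Finset.range n, q ^ i = q ^ m * (q ^ n - 1) / (q - 1) := by
  rw [Nat.geomSum_eq hq, Nat.mul_div_assoc _ (Nat.sub_one_dvd_pow_sub_one q n)]

theorem odd_geom_sum {q n : ℕ} (hq : Odd q) (hn : Odd n) :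
    Odd (∑ i ∈ Finset.range n, q ^ i) := by
  have hfilter : {i ∈ Finset.range n | Odd (q ^ i)} = Finset.range n :=
    Finset.filter_true_of_mem fun _ _ => hq.pow
  rwa [Finset.odd_sum_iff_odd_card_odd, hfilter, Finset.card_range]

theorem rpow_two_sub_mul_pow_le {ε q D C : ℝ} {d k : ℕ} (hε : 0 ≤ ε) (hk : k ≤ d * ε)
    (hq : 1 ≤ q) (hqD : q ^ d ≤ D) (hDq : D ≤ C * q ^ d) :
    D ^ (2 - ε) * q ^ k ≤ C ^ 2 * q ^ (2 * d) := by
  have hq0 : 0 < q := one_pos.trans_le hq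
  have hD : 0 < D := (pow_pos hq0 d).trans_le hqD
  have hqk : q ^ k ≤ D ^ ε := calc
    q ^ k ≤ q ^ (d * ε) := by
      rw [← rpow_natCast]
      exact rpow_le_rpow_of_exponent_le hq hk
    _ = (q ^ d) ^ ε := by rw [rpow_mul hq0.le, rpow_natCast]
    _ ≤ D ^ ε := rpow_le_rpow (by positivity) hqD hε
  calc
    D ^ (2 - ε) * q ^ k ≤ D ^ (2 - ε) * D ^ ε := by gcongr
    _ = D ^ 2 := by rw [← rpow_add hD, sub_add_cancel, rpow_two]
    _ ≤ (C * q ^ d) ^ 2 := by gcongr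
    _ = C ^ 2 * q ^ (2 * d) := by ring

theorem rpow_sum_lt {ε q D N : ℝ} {d : ℕ} (hd : 4 ≤ d) (hεd : 4 ≤ d * ε) (hq : 13 < q)
    (hqD : q ^ d ≤ D) (hDq : D ≤ 2 * q ^ d) (hN : q ^ (2 * d + 1) ≤ N * q ^ 4) :
    D ^ (2 - ε) + 2 * D ^ (1 - ε / 3) + D ^ (1 - 2 * ε / 3) + 3 < N := by
  have hε : 0 < ε := pos_of_mul_pos_right (four_pos.trans_le hεd) d.cast_nonneg
  have hq1 : 1 ≤ q := by linarith
  have hqd : 1 ≤ q ^ d := one_le_pow₀ hq1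
  have hle {a : ℝ} (ha : a ≤ 1) : D ^ a ≤ 2 * q ^ d :=
    (rpow_le_rpow_of_exponent_le (hqd.trans hqD) ha).trans (by rwa [rpow_one])
  have h₁ : D ^ (2 - ε) * q ^ 4 ≤ 2 ^ 2 * q ^ (2 * d) :=
    rpow_two_sub_mul_pow_le hε.le (by exact_mod_cast hεd) hq1 hqD hDq
  have h₂ : D ^ (1 - ε / 3) ≤ 2 * q ^ d := hle (by linarith)
  have h₃ : D ^ (1 - 2 * ε / 3) ≤ 2 * q ^ d := hle (by linarith)
  have hq4 : q ^ 4 ≤ q ^ d := pow_le_pow_right₀ hq1 hd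
  refine lt_of_mul_lt_mul_right ?_ (by positivity : 0 ≤ q ^ 4)
  calc
    (D ^ (2 - ε) + 2 * D ^ (1 - ε / 3) + D ^ (1 - 2 * ε / 3) + 3) * q ^ 4
      ≤ (D ^ (2 - ε) + 9 * q ^ d) * q ^ 4 :=
        mul_le_mul_of_nonneg_right (by linarith) (by positivity)
    _ = D ^ (2 - ε) * q ^ 4 + 9 * (q ^ d * q ^ 4) := by ring
    _ ≤ 2 ^ 2 * q ^ (2 * d) + 9 * (q ^ d * q ^ d) := by gcongr
    _ = 13 * q ^ (2 * d) := by ring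
    _ < q * q ^ (2 * d) := by gcongr
    _ = q ^ (2 * d + 1) := (pow_succ' q (2 * d)).symm
    _ ≤ N * q ^ 4 := hN

theorem rpow_sum_lt_geom_sum_mul_geom_sum {ε : ℝ} {q n Δ : ℕ} (hn : 1 ≤ n)
    (hεn : 4 ≤ (n + 3 : ℕ) * ε) (hq : 13 < q)
    (hΔ : Δ = q ^ 3 * ∑ i ∈ Finset.range (n + 1), q ^ i) :
    (Δ : ℝ) ^ (2 - ε) + 2 * (Δ : ℝ) ^ (1 - ε / 3) + (Δ : ℝ) ^ (1 - 2 * ε / 3) + 3 <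
      ((∑ i ∈ Finset.range (n + 3), q ^ i) * ∑ i ∈ Finset.range (n + 2), q ^ i : ℕ) := by
  have hlower : q ^ (n + 3) ≤ Δ := calc
    q ^ (n + 3) = q ^ 3 * q ^ n := by ring
    _ ≤ Δ := hΔ ▸ Nat.mul_le_mul_left _ (pow_le_geom_sum q n)
  have hupper : Δ ≤ 2 * q ^ (n + 3) := calc
    Δ ≤ q ^ 3 * (2 * q ^ n) :=
      hΔ ▸ Nat.mul_le_mul_left _ (geom_sum_le_two_mul_pow (by omega) n)
    _ = 2 * q ^ (n + 3) := by ring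
  have hcard : q ^ (2 * (n + 3) + 1) ≤
      ((∑ i ∈ Finset.range (n + 3), q ^ i) * ∑ i ∈ Finset.range (n + 2), q ^ i) * q ^ 4 := calc
    q ^ (2 * (n + 3) + 1) = q ^ (n + 2) * q ^ (n + 1) * q ^ 4 := by ring
    _ ≤ _ := by
      gcongr
      exacts [pow_le_geom_sum q (n + 2), pow_le_geom_sum q (n + 1)]
  exact rpow_sum_lt (q := q) (by omega) hεn (by exact_mod_cast hq) (by exact_mod_cast hlower)
    (by exact_mod_cast hupper) (by exact_mod_cast hcard)

open PointLineFlag in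
theorem arcTransitive_diameter_two_lower_bound_odd_degree_general
    (ε : ℝ) (hε0 : 0 < ε) (M : ℕ) :
    ∃ (Δ q d : ℕ), Odd Δ ∧ M < Δ ∧
      IsPrimePow q ∧ Odd q ∧ Odd d ∧ (3 : ℝ) / ε ≤ (d : ℝ) ∧
      Δ = q ^ 3 * (q ^ (d - 2) - 1) / (q - 1) ∧
      ∃ (V : Type) (_ : Fintype V) (G : SimpleGraph V),
        G.IsArcTransitive ∧
        (∀ v : V, (G.neighborSet v).ncard = Δ) ∧
        G.Connected ∧ (∀ u v : V, G.dist u v ≤ 2) ∧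
        (Δ : ℝ) ^ (2 - ε) + 2 * (Δ : ℝ) ^ (1 - ε / 3) + (Δ : ℝ) ^ (1 - 2 * ε / 3) + 3 <
          (Fintype.card V : ℝ) := by
  obtain ⟨k, hk⟩ := exists_nat_ge (4 / ε)
  obtain ⟨q, hqM, hq⟩ := Nat.exists_infinite_primes (M + 14)
  have : Fact q.Prime := ⟨hq⟩
  have hqodd : Odd q := hq.odd_of_ne_two (by omega)
  have hk0 : 0 < k := Nat.cast_pos.1 ((div_pos four_pos hε0).trans_le hk)
  have hkε : 4 ≤ k * ε := (div_le_iff₀ hε0).1 hk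
  have hΔ : Odd (q ^ 3 * ∑ i ∈ Finset.range (2 * k + 1), q ^ i) :=
    hqodd.pow.mul (odd_geom_sum hqodd ⟨k, rfl⟩)
  have hqΔ := Nat.le_of_dvd hΔ.pos ((dvd_pow_self q three_ne_zero).mul_right _)
  have hV : finrank (ZMod q) (Fin (2 * k + 3) → ZMod q) = 2 * k + 3 := finrank_fin_fun _
  refine ⟨_, q, 2 * k + 3, hΔ, by omega, hq.isPrimePow, hqodd, ⟨k + 1, by ring⟩, ?_,
    pow_mul_geom_sum_eq_div hq.two_le 3 _,
    PointLineFlag (ZMod q) (Fin (2 * k + 3) → ZMod q), Fintype.ofFinite _, flagGraph _ _,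
    flagGraph_isArcTransitive, fun F => ?_,
    flagGraph_connected (by omega), flagGraph_dist_le_two (by omega), ?_⟩
  · rw [div_le_iff₀ hε0]
    push_cast
    linarith
  · rw [ncard_neighborSet_of_finrank hV, Nat.card_zmod]
  · rw [Fintype.card_eq_nat_card, card_of_finrank hV, Nat.card_zmod]
    refine rpow_sum_lt_geom_sum_mul_geom_sum (by omega) ?_ (by omega) rfl
    push_cast
    linarith

theorem arcTransitive_diameter_two_lower_bound_odd_degree
    (ε : ℝ) (hε0 : 0 < ε) (hε1 : ε < 1) (M : ℕ) :
    ∃ (Δ q d : ℕ), Odd Δ ∧ M < Δ ∧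
      IsPrimePow q ∧ Odd q ∧ Odd d ∧ (3 : ℝ) / ε ≤ (d : ℝ) ∧
      Δ = q ^ 3 * (q ^ (d - 2) - 1) / (q - 1) ∧
      ∃ (V : Type) (_ : Fintype V) (G : SimpleGraph V),
        G.IsArcTransitive ∧
        (∀ v : V, (G.neighborSet v).ncard = Δ) ∧
        G.Connected ∧ (∀ u v : V, G.dist u v ≤ 2) ∧
        (Δ : ℝ) ^ (2 - ε) + 2 * (Δ : ℝ) ^ (1 - ε / 3) + (Δ : ℝ) ^ (1 - 2 * ε / 3) + 3 <
          (Fintype.card V : ℝ) :=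
  arcTransitive_diameter_two_lower_bound_odd_degree_general ε hε0 M
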